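/- Let F be a finite family of pairwise disjoint translates of a convex body in ℝ², let C ∈ F, and let V(C) = {p ∈ ℝ² : there exists q ∈ ∂C such that the closed segment [p,q] does not intersect the interior of any member of F}. Then the interior of C is a bounded connected component of ℝ² \ V(C), and every bounded connected component of ℝ² \ V(C) equals the interior of C. -/

import Mathlib

/-!
Why the complement of `V(C)` has no bounded component outside `C`. Let `x ∉ C` be invisible. For
`c ∈ C` consider the ray from `x` pointing away from `c`. If for some `c` this ray stays invisible,
it leads from `x` to infinity inside the complement of `V(C)`. Otherwise every such ray contains a
point seeing some `d ∈ ∂C`. The set of `c` for which `d` can be chosen to the left of the line `xc`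
and the set for which it can be chosen to the right are closed (for rays cut off at a fixed
parameter), they cover `C`, and both are nonempty, as the two tangents from `x` to `C` show. As `C`
is connected, there is a `c` for which both occur.

So two points `y`, `y'` of one ray see points `d`, `d'` of `C` on different sides of the line `xc`;
neither `d` nor `d'` is on that line, since otherwise the sight line would pass through `x`. Let `e`
be the point where the chord `[d, d']` of `C` meets the line. An obstacle `D ≠ C` blocks the view
from `x` to `e`. It crosses neither of the sight lines `[y, d]`, `[y', d']` nor the chord `[d, d']`,
so on one side of the line it stays below the height of `d`, and on the other side below that of
`d'`. But `D` contains a translate of `C`, hence a translate `[d + v, d' + v]` of the chord, and one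
end of it is at least as far from the line as the corresponding end of `[d, d']`.
-/

open Set Metric ENNReal

noncomputable section

abbrev E2 := EuclideanSpace ℝ (Fin 2)

/-- A convex body in the plane: a compact convex set with nonempty interior. -/
def IsConvexBody (C : Set E2) : Prop :=
  Convex ℝ C ∧ IsCompact C ∧ (interior C).Nonempty

/-- The (unlimited vision) visibility region of `C` with respect to the obstacle
family `F`: all points that see some boundary point of `C`. -/
def Vis (F : Set (Set E2)) (C : Set E2) : Set E2 :=
  {p | ∃ q ∈ frontier C, ∀ D ∈ F, Disjoint (segment ℝ p q) (interior D)}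

open Module
open scoped RealInnerProductSpace Pointwise EuclideanSpace

section Components

lemma connectedComponentIn_eq_interior {X : Type*} [TopologicalSpace X] {A s : Set X} {x : X}
    (hA : IsPreconnected (interior A)) (hAs : interior A ⊆ s) (hs : Disjoint s (frontier A))
    (hx : x ∈ interior A) : connectedComponentIn s x = interior A := by
  refine Subset.antisymm ?_ (hA.subset_connectedComponentIn hx hAs)
  refine isPreconnected_connectedComponentIn.subset_left_of_subset_union isOpen_interior
    isOpen_interior (disjoint_compl_right.mono interior_subset interior_subset) ?_
    ⟨x, mem_connectedComponentIn (hAs hx), hx⟩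
  rw [← compl_frontier_eq_union_interior]
  exact (connectedComponentIn_subset s x).trans hs.subset_compl_right

lemma not_isBounded_connectedComponentIn_of_rays {E : Type*} [NormedAddCommGroup E]
    [NormedSpace ℝ E] {C s : Set E} {x : E} (hC : IsClosed C) (hne : C.Nonempty) (hx : x ∉ C)
    (hray : ∀ S : ℝ, ∃ c ∈ C, ∀ t ∈ Icc 0 S, x + t • (x - c) ∈ s) :
    ¬ Bornology.IsBounded (connectedComponentIn s x) := by
  intro hbdd
  obtain ⟨R, hR, hsub⟩ := hbdd.subset_closedBall_lt 0 x
  have hδ : 0 < infDist x C := (hC.notMem_iff_infDist_pos hne).mp hx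
  set S := (R + 1) / infDist x C
  have hS : 0 ≤ S := by positivity
  obtain ⟨c, hc, hcs⟩ := hray S
  have hray_sub : (fun t : ℝ => x + t • (x - c)) '' Icc 0 S ⊆ connectedComponentIn s x :=
    (isPreconnected_Icc.image _ (by fun_prop)).subset_connectedComponentIn
      ⟨0, ⟨le_rfl, hS⟩, by simp⟩ (image_subset_iff.mpr hcs)
  have hnear := hsub (hray_sub ⟨S, ⟨hS, le_rfl⟩, rfl⟩)
  rw [mem_closedBall, dist_self_add_left, norm_smul, Real.norm_of_nonneg hS] at hnear
  have hfar : R + 1 ≤ S * ‖x - c‖ := calc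
    R + 1 = S * infDist x C := (div_mul_cancel₀ _ hδ.ne').symm
    _ ≤ S * ‖x - c‖ := by
      gcongr
      exact dist_eq_norm x c ▸ infDist_le_dist_of_mem hc
  linarith

end Components

section Visibility

variable {E : Type*} [AddCommGroup E] [Module ℝ E] [TopologicalSpace E]
  {F : Set (Set E)} {C : Set E} {x p q p' q' e : E}

/-- Mutual visibility of `p` and `q` past the obstacles of `F`: only the interiors of the obstacles
block the view, so that sight lines may graze them. -/
def MutuallyVisible (F : Set (Set E)) (p q : E) : Prop :=
  ∀ D ∈ F, Disjoint (segment ℝ p q) (interior D)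

/-- The visibility region `V(C)` of `C` among the obstacles `F`; in the plane `E2` it is `Vis F C`
by definition. -/
def visibilityRegion (F : Set (Set E)) (C : Set E) : Set E :=
  {p | ∃ q ∈ frontier C, MutuallyVisible F p q}

lemma MutuallyVisible.mono (h : MutuallyVisible F p q)
    (hsub : segment ℝ p' q' ⊆ segment ℝ p q) : MutuallyVisible F p' q' :=
  fun D hD => (h D hD).mono_left hsub

lemma isClosed_setOf_mutuallyVisible [IsTopologicalAddGroup E] [ContinuousSMul ℝ E]
    (F : Set (Set E)) : IsClosed {z : E × E | MutuallyVisible F z.1 z.2} := by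
  simp only [MutuallyVisible, Set.disjoint_left, segment_eq_image', forall_mem_image, ofPred_forall]
  refine isClosed_biInter fun D _ => isClosed_biInter fun t _ => ?_
  exact isOpen_interior.isClosed_compl.preimage
    (f := fun z : E × E => z.1 + t • (z.2 - z.1)) (by fun_prop)

lemma interior_subset_compl_visibilityRegion (hC : C ∈ F) :
    interior C ⊆ (visibilityRegion F C)ᶜ := by
  rintro p hp ⟨q, -, hpq⟩
  exact Set.disjoint_left.mp (hpq C hC) (left_mem_segment ℝ p q) hp

lemma frontier_subset_visibilityRegion (hC : IsClosed C)
    (hdisj : ∀ D ∈ F, D ≠ C → Disjoint C D) : frontier C ⊆ visibilityRegion F C := by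
  refine fun q hq => ⟨q, hq, fun D hD => ?_⟩
  rw [segment_same, Set.disjoint_singleton_left]
  rcases eq_or_ne D C with rfl | hDC
  · exact hq.2
  · exact fun hqD => Set.disjoint_left.mp (hdisj D hD hDC) (hC.frontier_subset hq)
      (interior_subset hqD)

lemma exists_obstacle_of_notMem_visibilityRegion [IsTopologicalAddGroup E] [ContinuousSMul ℝ E]
    (hC : IsClosed C) (hxC : x ∉ C) (hx : x ∉ visibilityRegion F C) (he : e ∈ C) :
    ∃ D ∈ F, D ≠ C ∧ ∃ z ∈ segment ℝ x e, z ∈ interior D := by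
  obtain ⟨q, hqC, hxqe, hvis⟩ := hC.exists_wbtw_isVisible he x
  have hq : q ∉ interior C := fun h => hxC (hvis.eq_of_mem_interior h ▸ hqC)
  have hfree : Disjoint (segment ℝ x q) (interior C) := by
    refine Set.disjoint_left.mpr fun z hz hzC => hvis (interior_subset hzC) ?_
    exact ⟨mem_segment_iff_wbtw.mp hz, ne_of_mem_of_not_mem (interior_subset hzC) hxC,
      ne_of_mem_of_not_mem hzC hq⟩
  have hblocked : ¬ MutuallyVisible F x q := fun h => hx ⟨q, ⟨subset_closure hqC, hq⟩, h⟩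
  simp only [MutuallyVisible, not_forall, Set.not_disjoint_iff] at hblocked
  obtain ⟨D, hD, z, hz, hzD⟩ := hblocked
  refine ⟨D, hD, ?_, z, ?_, hzD⟩
  · rintro rfl
    exact Set.disjoint_left.mp hfree hz hzD
  · exact (convex_segment x e).segment_subset (left_mem_segment ℝ x e)
      (mem_segment_iff_wbtw.mpr hxqe) hz

end Visibility

section Trapping

variable {E : Type*} [AddCommGroup E] [Module ℝ E] [TopologicalSpace E]
  [IsTopologicalAddGroup E] [ContinuousSMul ℝ E]
  {D : Set E} {d d' e u v : E} {τ α β a b k m : ℝ}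

lemma exists_exit_time_of_one_le (a : ℝ) (hτ : 0 < τ) (hτα : τ ≤ α) (hb : 1 ≤ b) :
    ∃ t ∈ Icc (0 : ℝ) 1, t * b ∈ Icc (0 : ℝ) 1 ∧
      ((1 - t) * τ + t * a = 0 ∨ t < 1 ∧ (1 - t) * τ + t * a = α * (1 - t * b)) := by
  -- The point at time `t` on the way from `(τ, 0)` to `(a, b)` is `(φ t, t * b)`; it lies to the
  -- left of the line through `(α, 0)` and `(0, 1)` by the horizontal distance `ψ t`.
  let φ : ℝ → ℝ := fun t => (1 - t) * τ + t * a
  let ψ : ℝ → ℝ := fun t => α * (1 - t * b) - φ t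
  have hα : 0 < α := hτ.trans_le hτα
  have hsum (t : ℝ) : φ t + ψ t = α * (1 - t * b) := add_sub_cancel _ _
  have hend : φ 1 + ψ 1 ≤ 0 := by
    rw [hsum, one_mul]
    exact mul_nonpos_of_nonneg_of_nonpos hα.le (sub_nonpos.mpr hb)
  obtain ⟨t, ⟨ht0, ht1⟩, ht⟩ : ∃ t ∈ Icc (0 : ℝ) 1, min (φ t) (ψ t) = 0 := by
    refine intermediate_value_Icc' zero_le_one (by fun_prop) ⟨?_, ?_⟩
    · rcases le_total (φ 1) 0 with h | h
      · exact (min_le_left _ _).trans h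
      · exact (min_le_right _ _).trans (by linarith)
    · simp [φ, ψ, hτ.le, hτα]
  have hφ : 0 ≤ φ t := ht ▸ min_le_left _ _
  have hψ : 0 ≤ ψ t := ht ▸ min_le_right _ _
  have htb : t * b ≤ 1 :=
    sub_nonneg.mp (nonneg_of_mul_nonneg_right (hsum t ▸ add_nonneg hφ hψ) hα)
  refine ⟨t, ⟨ht0, ht1⟩, ⟨by positivity, htb⟩, ?_⟩
  rcases hφ.eq_or_lt with hφ0 | hφ_pos
  · exact Or.inl hφ0.symm
  · have hψ0 : ψ t = 0 := ((min_eq_iff.mp ht).resolve_left fun h => hφ_pos.ne' h.1).1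
    refine Or.inr ⟨ht1.lt_of_ne ?_, sub_eq_zero.mp hψ0 |>.symm⟩
    rintro rfl
    linarith

lemma height_lt_one_of_trapped (hD : Convex ℝ D) (hτ : 0 < τ) (hτα : τ ≤ α)
    (hz : e + τ • u ∈ interior D) (hchord : Disjoint (segment ℝ e d) D)
    (hsight : Disjoint (segment ℝ (e + α • u) d) (interior D))
    (hp : e + a • u + b • (d - e) ∈ D) : b < 1 := by
  by_contra! hb
  have hpath (t : ℝ) : (1 - t) • (e + τ • u) + t • (e + a • u + b • (d - e)) =
      e + ((1 - t) * τ + t * a) • u + (t * b) • (d - e) := by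
    module
  obtain ⟨t, ⟨ht0, ht1⟩, htb, hmeets_chord | ⟨ht1', hmeets_sight⟩⟩ :=
    exists_exit_time_of_one_le a hτ hτα hb
  · have hmem := hD (interior_subset hz) hp (sub_nonneg.mpr ht1) ht0 (sub_add_cancel 1 t)
    rw [hpath, hmeets_chord, zero_smul, add_zero] at hmem
    refine Set.disjoint_left.mp hchord ?_ hmem
    rw [segment_eq_image']
    exact ⟨t * b, htb, rfl⟩
  · have hmem := hD.combo_interior_self_mem_interior hz hp (sub_pos.mpr ht1') ht0
      (sub_add_cancel 1 t)
    rw [hpath, hmeets_sight] at hmem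
    refine Set.disjoint_left.mp hsight ?_ hmem
    rw [segment_eq_image']
    exact ⟨t * b, htb, by module⟩

lemma not_translate_mem_of_trapped (hD : Convex ℝ D) (he : e ∈ openSegment ℝ d d')
    (hτ : 0 < τ) (hτα : τ ≤ α) (hτβ : τ ≤ β) (hz : e + τ • u ∈ interior D)
    (hchord : Disjoint (segment ℝ d d') D)
    (hsight : Disjoint (segment ℝ (e + α • u) d) (interior D))
    (hsight' : Disjoint (segment ℝ (e + β • u) d') (interior D))
    (hv : v = k • u + m • (d' - d)) (hd : d + v ∈ D) : d' + v ∉ D := by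
  intro hd'
  have heC := openSegment_subset_segment ℝ d d' he
  obtain ⟨a, b, ha, hb, hab, rfl⟩ := he
  set e := a • d + b • d' with he
  obtain rfl : a = 1 - b := by linarith
  -- In coordinates at `e`, the point `d + v` has height `1 - m / b` in units of `d - e`, and
  -- `d' + v` has height `1 + m / (1 - b)` in units of `d' - e`; one of these is at least `1`.
  have hheight : 1 - m / b < 1 := by
    refine height_lt_one_of_trapped hD hτ hτα hz ?_ hsight (a := k) ?_
    · exact hchord.mono_left
        ((convex_segment d d').segment_subset heC (left_mem_segment ℝ d d'))
    · convert hd using 1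
      rw [hv, he]
      match_scalars <;> field
  have hheight' : 1 + m / (1 - b) < 1 := by
    refine height_lt_one_of_trapped hD hτ hτβ hz ?_ hsight' (a := k) ?_
    · exact hchord.mono_left
        ((convex_segment d d').segment_subset heC (right_mem_segment ℝ d d'))
    · convert hd' using 1
      rw [hv, he]
      match_scalars <;> field
  have hm_pos : 0 < m := (div_pos_iff_of_pos_right hb).mp (by linarith)
  have hm_neg : m / (1 - b) < 0 := by linarith
  exact hm_neg.not_ge (by positivity)

end Trapping

section OrientedPlane

variable {E : Type*} [NormedAddCommGroup E] [InnerProductSpace ℝ E] [Fact (finrank ℝ E = 2)]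
  (o : Orientation ℝ E (Fin 2)) {F : Set (Set E)} {C : Set E} {x c d d' e u w : E} {s : ℝ}

local notation "ω" => o.areaForm

lemma areaForm_smul_eq (u v w : E) : ω u w • v = ω v w • u + ω u v • w := by
  refine ext_inner_left ℝ fun a => ?_
  rcases eq_or_ne a 0 with rfl | ha
  · simp
  refine mul_left_cancel₀ (pow_ne_zero 2 (norm_ne_zero_iff.mpr ha)) ?_
  simp only [inner_add_right, real_inner_smul_right]
  linear_combination
    -⟪a, v⟫ * o.inner_mul_areaForm_sub a u w + ⟪a, u⟫ * o.inner_mul_areaForm_sub a v w +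
      ⟪a, w⟫ * o.inner_mul_areaForm_sub a u v

lemma exists_eq_smul_add_smul (h : ω u w ≠ 0) (v : E) : ∃ r t : ℝ, v = r • u + t • w := by
  refine ⟨(ω u w)⁻¹ * ω v w, (ω u w)⁻¹ * ω u v, ?_⟩
  rw [mul_smul, mul_smul, ← smul_add, ← areaForm_smul_eq, inv_smul_smul₀ h]

lemma exists_forall_areaForm_nonneg (hC : Convex ℝ C) (hCk : IsCompact C) (hne : C.Nonempty)
    (hx : x ∉ C) : ∃ c ∈ C, ∀ d ∈ C, 0 ≤ ω (c - x) (d - x) := by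
  have : FiniteDimensional ℝ E := .of_fact_finrank_eq_two
  have : CompleteSpace E := FiniteDimensional.complete ℝ E
  obtain ⟨f, r, hfx, hfC⟩ := geometric_hahn_banach_point_closed hC hCk.isClosed hx
  obtain ⟨a, rfl⟩ := (InnerProductSpace.toDual ℝ E).surjective f
  simp only [InnerProductSpace.toDual_apply_apply] at hfx hfC
  have hpos : ∀ d ∈ C, 0 < ⟪a, d - x⟫ := fun d hd => by
    rw [inner_sub_right]
    linarith [hfC d hd]
  -- The slope with respect to `a` orders the directions from `x` to `C`.
  have hcont : ContinuousOn (fun d => ω a (d - x) / ⟪a, d - x⟫) C := by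
    simp only [← o.inner_rightAngleRotation_left]
    exact ContinuousOn.div (by fun_prop) (by fun_prop) fun d hd => (hpos d hd).ne'
  obtain ⟨c, hc, hmin⟩ := hCk.exists_isMinOn hne hcont
  refine ⟨c, hc, fun d hd => ?_⟩
  have hslope : ω a (c - x) / ⟪a, c - x⟫ ≤ ω a (d - x) / ⟪a, d - x⟫ := hmin hd
  rw [div_le_div_iff₀ (hpos c hc) (hpos d hd)] at hslope
  have ha : a ≠ 0 := by
    rintro rfl
    simpa using hpos c hc
  refine nonneg_of_mul_nonneg_right (a := ‖a‖ ^ 2) ?_ (by positivity)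
  rw [← o.inner_mul_areaForm_sub]
  linarith

lemma sameRay_of_areaForm_eq_zero (hC : Convex ℝ C) (hx : x ∉ C) (hc : c ∈ C) (hd : d ∈ C)
    (h : ω (c - x) (d - x) = 0) : SameRay ℝ (c - x) (d - x) := by
  rw [← o.nonneg_inner_and_areaForm_eq_zero_iff_sameRay]
  refine ⟨?_, h⟩
  by_contra! hneg
  have hopp : SameRay ℝ (x - c) (d - x) := by
    rw [← neg_sub c x, ← o.nonneg_inner_and_areaForm_eq_zero_iff_sameRay, inner_neg_left, map_neg,
      LinearMap.neg_apply, h]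
    exact ⟨by linarith, neg_zero⟩
  exact hx (hC.segment_subset hc hd (mem_segment_iff_sameRay.mpr hopp))

lemma areaForm_ne_zero_of_mutuallyVisible (hC : Convex ℝ C) (hx : x ∉ C) (hc : c ∈ C)
    (hd : d ∈ C) (hs : 0 ≤ s) (hsee : MutuallyVisible F (x + s • (x - c)) d)
    (hxd : ¬ MutuallyVisible F x d) : ω (c - x) (d - x) ≠ 0 := by
  refine fun h => hxd (hsee.mono ?_)
  refine (convex_segment _ _).segment_subset ?_ (right_mem_segment ℝ _ _)
  rw [mem_segment_iff_sameRay, show x - (x + s • (x - c)) = s • (c - x) by module]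
  exact (sameRay_of_areaForm_eq_zero o hC hx hc hd h).nonneg_smul_left hs

/-- The points `c` of `C` such that the first part (up to parameter `S`) of the ray from `x`
pointing away from `c` contains a point seeing the boundary of `C` weakly to the left of the line
from `x` to `c`; the right-hand version is the same notion for the opposite orientation `-o`. -/
def leftSighted (F : Set (Set E)) (C : Set E) (x : E) (S : ℝ) : Set E :=
  {c ∈ C | ∃ s ∈ Icc 0 S, ∃ d ∈ frontier C,
    MutuallyVisible F (x + s • (x - c)) d ∧ 0 ≤ ω (c - x) (d - x)}

lemma isClosed_leftSighted (F : Set (Set E)) (hC : IsCompact C) (x : E) (S : ℝ) :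
    IsClosed (leftSighted o F C x S) := by
  let A : Set (E × ℝ × E) := (C ×ˢ (Icc 0 S ×ˢ frontier C)) ∩
    ({z | MutuallyVisible F (x + z.2.1 • (x - z.1)) z.2.2} ∩ {z | 0 ≤ ω (z.1 - x) (z.2.2 - x)})
  have hA : IsCompact A := by
    have hCf : IsCompact (frontier C) :=
      hC.of_isClosed_subset isClosed_frontier hC.isClosed.frontier_subset
    refine (hC.prod (isCompact_Icc.prod hCf)).inter_right (IsClosed.inter ?_ ?_)
    · exact (isClosed_setOf_mutuallyVisible F).preimage
        (f := fun z : E × ℝ × E => (x + z.2.1 • (x - z.1), z.2.2)) (by fun_prop)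
    · simp only [← o.inner_rightAngleRotation_left]
      exact isClosed_le continuous_const (by fun_prop)
  have hproj : leftSighted o F C x S = Prod.fst '' A := by
    ext c
    constructor
    · rintro ⟨hc, s, hs, d, hd, hsee, hleft⟩
      exact ⟨(c, s, d), ⟨⟨hc, hs, hd⟩, hsee, hleft⟩, rfl⟩
    · rintro ⟨⟨c, s, d⟩, ⟨⟨hc, hs, hd⟩, hsee, hleft⟩, rfl⟩
      exact ⟨hc, s, hs, d, hd, hsee, hleft⟩
  rw [hproj]
  exact (hA.image continuous_fst).isClosed

lemma inter_leftSighted_nonempty (hC : Convex ℝ C) (hCk : IsCompact C) (hne : C.Nonempty)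
    (hx : x ∉ C) {S : ℝ}
    (hsee : ∀ c ∈ C, ∃ s ∈ Icc 0 S, x + s • (x - c) ∈ visibilityRegion F C) :
    (C ∩ leftSighted o F C x S).Nonempty := by
  obtain ⟨c, hc, hleft⟩ := exists_forall_areaForm_nonneg o hC hCk hne hx
  obtain ⟨s, hs, d, hd, hsd⟩ := hsee c hc
  exact ⟨c, hc, hc, s, hs, d, hd, hsd, hleft d (hCk.isClosed.frontier_subset hd)⟩

lemma leftSighted_inter_neg_nonempty (hC : Convex ℝ C) (hCk : IsCompact C) (hne : C.Nonempty)
    (hx : x ∉ C) {S : ℝ}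
    (hsee : ∀ c ∈ C, ∃ s ∈ Icc 0 S, x + s • (x - c) ∈ visibilityRegion F C) :
    (leftSighted o F C x S ∩ leftSighted (-o) F C x S).Nonempty := by
  have hcover : C ⊆ leftSighted o F C x S ∪ leftSighted (-o) F C x S := by
    intro c hc
    obtain ⟨s, hs, d, hd, hsd⟩ := hsee c hc
    rcases le_total 0 (ω (c - x) (d - x)) with hleft | hright
    · exact Or.inl ⟨hc, s, hs, d, hd, hsd, hleft⟩
    · exact Or.inr ⟨hc, s, hs, d, hd, hsd, by simpa [o.areaForm_neg_orientation] using hright⟩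
  exact (isPreconnected_closed_iff.mp hC.isPreconnected _ _ (isClosed_leftSighted o F hCk x S)
    (isClosed_leftSighted (-o) F hCk x S) hcover (inter_leftSighted_nonempty o hC hCk hne hx hsee)
    (inter_leftSighted_nonempty (-o) hC hCk hne hx hsee)).mono inter_subset_right

lemma exists_mem_openSegment_areaForm_eq_zero (hd : 0 < ω u (d - x)) (hd' : ω u (d' - x) < 0) :
    ∃ e ∈ openSegment ℝ d d', ω u (e - x) = 0 := by
  simp only [map_sub, sub_pos, sub_neg] at hd hd'
  have hmem : ω u x ∈ ω u '' openSegment ℝ d' d := by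
    rw [← LinearMap.coe_toAffineMap, image_openSegment]
    exact openSegment_eq_Ioo (hd'.trans hd) ▸ ⟨hd', hd⟩
  obtain ⟨e, he, heq⟩ := hmem
  exact ⟨e, openSegment_symm ℝ d' d ▸ he, by rw [map_sub, heq, sub_self]⟩

lemma not_mutuallyVisible_of_chord (hC : Convex ℝ C) (hCc : IsClosed C)
    (hconv : ∀ D ∈ F, Convex ℝ D) (htrans : ∀ D ∈ F, ∃ v : E, v +ᵥ C ⊆ D)
    (hdisj : ∀ D ∈ F, D ≠ C → Disjoint C D) (hd : d ∈ C) (hd' : d' ∈ C)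
    (he : e ∈ openSegment ℝ d d') (hu : ω u (d' - d) ≠ 0) {r α β : ℝ} (hr : 0 ≤ r)
    (hrα : r ≤ α) (hrβ : r ≤ β) (hxC : e + r • u ∉ C) (hx : e + r • u ∉ visibilityRegion F C)
    (hsee : MutuallyVisible F (e + α • u) d) : ¬ MutuallyVisible F (e + β • u) d' := by
  intro hsee'
  have heC : e ∈ C := hC.openSegment_subset hd hd' he
  obtain ⟨D, hD, hDC, z, hz, hzD⟩ := exists_obstacle_of_notMem_visibilityRegion hCc hxC hx heC
  have hCD := hdisj D hD hDC
  rw [segment_symm, segment_eq_image', add_sub_cancel_left] at hz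
  obtain ⟨t, ⟨ht0, ht1⟩, rfl⟩ := hz
  simp only [smul_smul] at hzD
  have hτ : 0 < t * r := by
    refine (mul_nonneg ht0 hr).lt_of_ne fun h => ?_
    rw [← h, zero_smul, add_zero] at hzD
    exact Set.disjoint_left.mp hCD heC (interior_subset hzD)
  have hτr : t * r ≤ r := mul_le_of_le_one_left hr ht1
  obtain ⟨v, hv⟩ := htrans D hD
  obtain ⟨k, m, hvm⟩ := exists_eq_smul_add_smul o hu v
  have hmem : ∀ p ∈ C, p + v ∈ D := fun p hp => add_comm v p ▸ hv (vadd_mem_vadd_set hp)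
  exact not_translate_mem_of_trapped (hconv D hD) he hτ (hτr.trans hrα) (hτr.trans hrβ) hzD
    (hCD.mono_left (hC.segment_subset hd hd')) (hsee D hD) (hsee' D hD) hvm (hmem d hd)
    (hmem d' hd')

lemma disjoint_leftSighted_neg (hC : Convex ℝ C) (hCc : IsClosed C)
    (hconv : ∀ D ∈ F, Convex ℝ D) (htrans : ∀ D ∈ F, ∃ v : E, v +ᵥ C ⊆ D)
    (hdisj : ∀ D ∈ F, D ≠ C → Disjoint C D) (hxC : x ∉ C) (hx : x ∉ visibilityRegion F C)
    (S : ℝ) : Disjoint (leftSighted o F C x S) (leftSighted (-o) F C x S) := by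
  rw [Set.disjoint_left]
  rintro c ⟨hc, s, ⟨hs, -⟩, d, hd, hsd, hleft⟩ ⟨-, s', ⟨hs', -⟩, d', hd', hsd', hright⟩
  have hdC := hCc.frontier_subset hd
  have hdC' := hCc.frontier_subset hd'
  replace hleft : 0 < ω (c - x) (d - x) := hleft.lt_of_ne'
    (areaForm_ne_zero_of_mutuallyVisible o hC hxC hc hdC hs hsd fun h => hx ⟨d, hd, h⟩)
  replace hright : ω (c - x) (d' - x) < 0 := by
    refine lt_of_le_of_ne (by simpa [o.areaForm_neg_orientation] using hright) ?_
    exact areaForm_ne_zero_of_mutuallyVisible o hC hxC hc hdC' hs' hsd' fun h => hx ⟨d', hd', h⟩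
  obtain ⟨e, he, hce⟩ := exists_mem_openSegment_areaForm_eq_zero o hleft hright
  have heC : e ∈ C := hC.openSegment_subset hdC hdC' he
  obtain ⟨r, hr, hre⟩ := (sameRay_of_areaForm_eq_zero o hC hxC hc heC hce).exists_nonneg_left
    (sub_ne_zero.mpr (ne_of_mem_of_not_mem hc hxC))
  have hu : ω (x - c) (d' - d) ≠ 0 := by
    have : ω (x - c) (d' - d) = ω (c - x) (d - x) - ω (c - x) (d' - x) := by
      simp only [map_sub, LinearMap.sub_apply]
      ring
    linarith
  have hxe : e + r • (x - c) = x := by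
    rw [← neg_sub c x, smul_neg, hre]
    abel
  have hray (t : ℝ) : e + (r + t) • (x - c) = x + t • (x - c) := by
    rw [add_smul, ← add_assoc, hxe]
  exact not_mutuallyVisible_of_chord o hC hCc hconv htrans hdisj hdC hdC' he hu hr
    (le_add_of_nonneg_right hs) (le_add_of_nonneg_right hs') (hxe.symm ▸ hxC) (hxe.symm ▸ hx)
    ((hray s).symm ▸ hsd) ((hray s').symm ▸ hsd')

end OrientedPlane

section Plane

variable {E : Type*} [NormedAddCommGroup E] [InnerProductSpace ℝ E] [Fact (finrank ℝ E = 2)]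
  {F : Set (Set E)} {C : Set E} {x : E}

lemma exists_ray_subset_compl_visibilityRegion (hC : Convex ℝ C) (hCk : IsCompact C)
    (hne : C.Nonempty) (hconv : ∀ D ∈ F, Convex ℝ D) (htrans : ∀ D ∈ F, ∃ v : E, v +ᵥ C ⊆ D)
    (hdisj : ∀ D ∈ F, D ≠ C → Disjoint C D) (hxC : x ∉ C) (hx : x ∉ visibilityRegion F C)
    (S : ℝ) : ∃ c ∈ C, ∀ s ∈ Icc 0 S, x + s • (x - c) ∈ (visibilityRegion F C)ᶜ := by
  have : FiniteDimensional ℝ E := .of_fact_finrank_eq_two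
  let o : Orientation ℝ E (Fin 2) := (finBasisOfFinrankEq ℝ E Fact.out).orientation
  by_contra! hsee
  simp only [notMem_compl_iff] at hsee
  exact not_disjoint_iff_nonempty_inter.mpr
    (leftSighted_inter_neg_nonempty o hC hCk hne hxC hsee)
    (disjoint_leftSighted_neg o hC hCk.isClosed hconv htrans hdisj hxC hx S)

theorem one_hole_for_translates_general (hCk : IsCompact C) (hne : C.Nonempty) (hCF : C ∈ F)
    (hconv : ∀ D ∈ F, Convex ℝ D) (htrans : ∀ D ∈ F, ∃ v : E, v +ᵥ C ⊆ D)
    (hdisj : ∀ D ∈ F, D ≠ C → Disjoint C D) :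
    interior C ⊆ (visibilityRegion F C)ᶜ ∧
    Bornology.IsBounded (interior C) ∧
    (∀ x ∈ interior C, connectedComponentIn (visibilityRegion F C)ᶜ x = interior C) ∧
    (∀ x ∈ (visibilityRegion F C)ᶜ,
      Bornology.IsBounded (connectedComponentIn (visibilityRegion F C)ᶜ x) →
      connectedComponentIn (visibilityRegion F C)ᶜ x = interior C) := by
  have hC := hconv C hCF
  have hinterior := interior_subset_compl_visibilityRegion hCF
  have hfrontier := frontier_subset_visibilityRegion hCk.isClosed hdisj
  have hcomponent : ∀ x ∈ interior C,
      connectedComponentIn (visibilityRegion F C)ᶜ x = interior C := fun x hx =>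
    connectedComponentIn_eq_interior hC.interior.isPreconnected hinterior
      (disjoint_compl_left_iff_subset.mpr hfrontier) hx
  refine ⟨hinterior, hCk.isBounded.subset interior_subset, hcomponent, fun x hx hbdd => ?_⟩
  by_cases hxi : x ∈ interior C
  · exact hcomponent x hxi
  · have hxC : x ∉ C := fun h => hx (hfrontier ⟨subset_closure h, hxi⟩)
    exact absurd hbdd (not_isBounded_connectedComponentIn_of_rays hCk.isClosed hne hxC
      (exists_ray_subset_compl_visibilityRegion hC hCk hne hconv htrans hdisj hxC hx))

end Plane

lemma image_add_right_eq_vadd {G : Type*} [AddCommMonoid G] (s : Set G) (w : G) :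
    (fun x => x + w) '' s = w +ᵥ s := by
  simp only [add_comm _ w, ← image_vadd, vadd_eq_add]

/-- For a finite family `F` of pairwise disjoint translates of a convex body and
`C ∈ F`, the visibility region `V(C)` has exactly one hole, namely `C` itself:
the interior of `C` is a bounded connected component of the complement of `V(C)`,
and every bounded connected component of the complement equals the interior of `C`. -/
theorem one_hole_for_translates
    (C₀ : Set E2) (hC₀ : IsConvexBody C₀)
    (F : Set (Set E2)) (hfin : F.Finite)
    (htr : ∀ D ∈ F, ∃ w : E2, D = (fun x => x + w) '' C₀)
    (hdisj : F.Pairwise Disjoint)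
    (C : Set E2) (hC : C ∈ F) :
    interior C ⊆ (Vis F C)ᶜ ∧
    Bornology.IsBounded (interior C) ∧
    (∀ x ∈ interior C, connectedComponentIn (Vis F C)ᶜ x = interior C) ∧
    (∀ x ∈ (Vis F C)ᶜ, Bornology.IsBounded (connectedComponentIn (Vis F C)ᶜ x) →
      connectedComponentIn (Vis F C)ᶜ x = interior C) := by
  obtain ⟨hconv, hcompact, hne⟩ := hC₀
  simp only [image_add_right_eq_vadd] at htr
  obtain ⟨w, rfl⟩ := htr C hC
  refine one_hole_for_translates_general (hcompact.vadd w)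
    (hne.mono interior_subset).vadd_set hC ?_ ?_ fun D hD hDC => hdisj hC hD hDC.symm
  · intro D hD
    obtain ⟨w', rfl⟩ := htr D hD
    exact hconv.vadd w'
  · intro D hD
    obtain ⟨w', rfl⟩ := htr D hD
    exact ⟨w' - w, by rw [vadd_vadd, sub_add_cancel]⟩

end
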